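/- arXiv:2212.01017 — 5 statements merged into one kernel-verified Lean document; each statement's English description precedes it below -/
import Mathlib

section
/- Let a ≥ 1 and n ≥ 3a + 6 be integers. Then ρ(G_2(a, n−2a−6, a−1)) > ρ(G_2(a, n−2a−7, a)). -/
open SimpleGraph

/-- Adjacency matrix of a simple graph over ℝ. -/
noncomputable def adjMat {V : Type*} (G : SimpleGraph V) : Matrix V V ℝ :=
  Matrix.of fun i j => @ite ℝ (G.Adj i j) (Classical.propDecidable _) 1 0

/-- Spectral radius: the largest eigenvalue (supremum of the real spectrum)
of the adjacency matrix. -/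
noncomputable def specRad {V : Type*} [Fintype V] [DecidableEq V]
    (G : SimpleGraph V) : ℝ :=
  sSup (spectrum ℝ (adjMat G))

/-- `D` is a dominating set of `G`. -/
def IsDomSet {V : Type*} (G : SimpleGraph V) (D : Finset V) : Prop :=
  ∀ v ∉ D, ∃ u ∈ D, G.Adj u v

/-- The domination number of `G`. -/
noncomputable def domNum {V : Type*} [Fintype V] (G : SimpleGraph V) : ℕ :=
  sInf {k | ∃ D : Finset V, IsDomSet G D ∧ D.card = k}

/-- The tree `G₂(a,b,c)`: the path v1 v4 v5 v2 v6 v7 v3 (vertices `Sum.inl 0, …, Sum.inl 6`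
in path order), with `a` pendant edges at v1, `b` pendant edges at v2 and `c` pendant
edges at v3. -/
def G2graph (a b c : ℕ) : SimpleGraph (Fin 7 ⊕ (Fin a ⊕ Fin b ⊕ Fin c)) :=
  SimpleGraph.fromRel (fun x y =>
    (x = Sum.inl 0 ∧ y = Sum.inl 1) ∨
    (x = Sum.inl 1 ∧ y = Sum.inl 2) ∨
    (x = Sum.inl 2 ∧ y = Sum.inl 3) ∨
    (x = Sum.inl 3 ∧ y = Sum.inl 4) ∨
    (x = Sum.inl 4 ∧ y = Sum.inl 5) ∨
    (x = Sum.inl 5 ∧ y = Sum.inl 6) ∨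
    (∃ j : Fin a, x = Sum.inl 0 ∧ y = Sum.inr (Sum.inl j)) ∨
    (∃ j : Fin b, x = Sum.inl 3 ∧ y = Sum.inr (Sum.inr (Sum.inl j))) ∨
    (∃ j : Fin c, x = Sum.inl 6 ∧ y = Sum.inr (Sum.inr (Sum.inr j))))


lemma adjMat_isHermitian {V : Type*} (G : SimpleGraph V) : (adjMat G).IsHermitian := by
  ext i j
  have h := G.adj_comm i j
  by_cases h1 : G.Adj i j
  · simp [adjMat, h1, h.1 h1]
  · simp [adjMat, h1, mt h.2 h1]

lemma specRad_mem {V : Type*} [Fintype V] [DecidableEq V] [Nonempty V] (G : SimpleGraph V) :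
    specRad G ∈ spectrum ℝ (adjMat G) := by
  unfold specRad
  apply Set.Nonempty.csSup_mem
  · rw [(adjMat_isHermitian G).spectrum_real_eq_range_eigenvalues]
    exact Set.range_nonempty _
  · exact Matrix.finite_real_spectrum

lemma lt_specRad {V : Type*} [Fintype V] [DecidableEq V] (G : SimpleGraph V) (t : ℝ) (x : V → ℝ)
    (h : t * ∑ v, x v * x v < ∑ v, x v * (adjMat G).mulVec x v) : t < specRad G := by
  by_contra hc
  push Not at hc
  have hB : (algebraMap ℝ (Matrix V V ℝ) t - adjMat G).PosSemidef := by
    rw [Matrix.posSemidef_iff_isHermitian_and_spectrum_nonneg]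
    constructor
    · apply Matrix.IsHermitian.sub _ (adjMat_isHermitian G)
      rw [Algebra.algebraMap_eq_smul_one]
      ext i j
      simp [Matrix.one_apply, eq_comm]
    · intro μ hμ
      rw [← spectrum.singleton_sub_eq] at hμ
      obtain ⟨_, rfl, ν, hν, rfl⟩ := hμ
      have : ν ≤ specRad G := le_csSup (Matrix.finite_real_spectrum).bddAbove hν
      simp only [Set.mem_ofPred_eq, sub_nonneg]
      linarith
  have h2 := hB.dotProduct_mulVec_nonneg x
  rw [Matrix.sub_mulVec, Algebra.algebraMap_eq_smul_one, Matrix.smul_mulVec, Matrix.one_mulVec,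
    dotProduct_sub, dotProduct_smul] at h2
  simp only [dotProduct, Pi.star_apply, star_trivial, smul_eq_mul] at h2
  linarith

lemma exists_eigenvector {V : Type*} [Fintype V] [DecidableEq V] [Nonempty V] (G : SimpleGraph V) :
    ∃ x : V → ℝ, x ≠ 0 ∧ ∀ v, (adjMat G).mulVec x v = specRad G * x v := by
  have h := specRad_mem G
  rw [← Matrix.spectrum_toLin', ← Module.End.hasEigenvalue_iff_mem_spectrum] at h
  obtain ⟨x, hx⟩ := h.exists_hasEigenvector
  refine ⟨x, hx.2, fun v => ?_⟩
  have := hx.apply_eq_smul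
  rw [Matrix.toLin'_apply] at this
  rw [this]; simp

section mv
variable (a b c : ℕ) (x : Fin 7 ⊕ (Fin a ⊕ Fin b ⊕ Fin c) → ℝ)

lemma mv0 : (adjMat (G2graph a b c)).mulVec x (.inl 0) =
    x (.inl 1) + ∑ j, x (.inr (.inl j)) := by
  simp [Matrix.mulVec, dotProduct, adjMat, G2graph, Fintype.sum_sum_type, Fin.sum_univ_seven]
lemma mv1 : (adjMat (G2graph a b c)).mulVec x (.inl 1) = x (.inl 0) + x (.inl 2) := by
  simp [Matrix.mulVec, dotProduct, adjMat, G2graph, Fintype.sum_sum_type, Fin.sum_univ_seven]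
lemma mv2 : (adjMat (G2graph a b c)).mulVec x (.inl 2) = x (.inl 1) + x (.inl 3) := by
  simp [Matrix.mulVec, dotProduct, adjMat, G2graph, Fintype.sum_sum_type, Fin.sum_univ_seven]
lemma mv3 : (adjMat (G2graph a b c)).mulVec x (.inl 3) = x (.inl 2) + x (.inl 4) +
    ∑ j, x (.inr (.inr (.inl j))) := by
  simp [Matrix.mulVec, dotProduct, adjMat, G2graph, Fintype.sum_sum_type, Fin.sum_univ_seven]
lemma mv4 : (adjMat (G2graph a b c)).mulVec x (.inl 4) = x (.inl 3) + x (.inl 5) := by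
  simp [Matrix.mulVec, dotProduct, adjMat, G2graph, Fintype.sum_sum_type, Fin.sum_univ_seven]
lemma mv5 : (adjMat (G2graph a b c)).mulVec x (.inl 5) = x (.inl 4) + x (.inl 6) := by
  simp [Matrix.mulVec, dotProduct, adjMat, G2graph, Fintype.sum_sum_type, Fin.sum_univ_seven]
lemma mv6 : (adjMat (G2graph a b c)).mulVec x (.inl 6) = x (.inl 5) +
    ∑ j, x (.inr (.inr (.inr j))) := by
  simp [Matrix.mulVec, dotProduct, adjMat, G2graph, Fintype.sum_sum_type, Fin.sum_univ_seven]
lemma mva (j) : (adjMat (G2graph a b c)).mulVec x (.inr (.inl j)) = x (.inl 0) := by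
  simp [Matrix.mulVec, dotProduct, adjMat, G2graph, Fintype.sum_sum_type, Fin.sum_univ_seven]
lemma mvb (j) : (adjMat (G2graph a b c)).mulVec x (.inr (.inr (.inl j))) = x (.inl 3) := by
  simp [Matrix.mulVec, dotProduct, adjMat, G2graph, Fintype.sum_sum_type, Fin.sum_univ_seven]
lemma mvc (j) : (adjMat (G2graph a b c)).mulVec x (.inr (.inr (.inr j))) = x (.inl 6) := by
  simp [Matrix.mulVec, dotProduct, adjMat, G2graph, Fintype.sum_sum_type, Fin.sum_univ_seven]
end mv

/-- Test-vector criterion with constant values on each class of leaves. -/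
lemma lt_specRad_G2 (a b c : ℕ) (t p r s q s' r' p' u v w : ℝ)
    (h : t * (p^2 + r^2 + s^2 + q^2 + s'^2 + r'^2 + p'^2 + a * u^2 + b * v^2 + c * w^2) <
      2 * (p*r + r*s + s*q + q*s' + s'*r' + r'*p' + a*p*u + b*q*v + c*p'*w)) :
    t < specRad (G2graph a b c) := by
  apply lt_specRad _ t
    (Sum.elim ![p,r,s,q,s',r',p'] (Sum.elim (fun _ => u) (Sum.elim (fun _ => v) (fun _ => w))))
  simp only [Fintype.sum_sum_type, Fin.sum_univ_seven, mv0, mv1, mv2, mv3, mv4, mv5, mv6, mva, mvb,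
    mvc]
  simp
  linarith

/-- Reduced criterion: with `D = 1/(t^2-1)`. -/
lemma lt_specRad_G2' (a b c : ℕ) (t p q p' : ℝ) (ht : 1 < t)
    (h : 0 < -(t - a / t - t / (t^2-1)) * p^2 - (t - c / t - t / (t^2-1)) * p'^2
      - (t - b / t - 2 * t / (t^2-1)) * q^2 + 2 * (p + p') * q / (t^2-1)) :
    t < specRad (G2graph a b c) := by
  have h1 : t^2 - 1 ≠ 0 := by nlinarith
  have h0 : t ≠ 0 := by linarith
  apply lt_specRad_G2 a b c t p ((t*p+q)/(t^2-1)) ((t*q+p)/(t^2-1)) q ((t*q+p')/(t^2-1))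
    ((t*p'+q)/(t^2-1)) p' (p/t) (q/t) (p'/t)
  rw [← sub_pos]
  refine lt_of_lt_of_eq h ?_
  field_simp
  ring

lemma one_lt_specRad_G2 (a b c : ℕ) : 1 < specRad (G2graph a b c) := by
  apply lt_specRad_G2 a b c 1 1 1 1 1 1 1 1 0 0 0
  norm_num

/-- Reduced eigen-equations. -/
lemma eig_G2 (a b c : ℕ) (t : ℝ) (ht : 1 < t) (hs : t = specRad (G2graph a b c)) :
    ∃ p q p' : ℝ, ¬ (p = 0 ∧ q = 0 ∧ p' = 0) ∧
      (t - a / t - t / (t^2-1)) * p = q / (t^2-1) ∧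
      (t - c / t - t / (t^2-1)) * p' = q / (t^2-1) ∧
      (t - b / t - 2 * t / (t^2-1)) * q = (p + p') / (t^2-1) := by
  obtain ⟨x, hx, he⟩ := exists_eigenvector (G2graph a b c)
  rw [← hs] at he
  have h1 : t^2 - 1 ≠ 0 := by nlinarith
  have h0 : t ≠ 0 := by linarith
  have ea : ∀ j, x (.inr (.inl j)) = x (.inl 0) / t := fun j => by
    have := he (.inr (.inl j)); rw [mva] at this; rw [this]; field_simp
  have eb : ∀ j, x (.inr (.inr (.inl j))) = x (.inl 3) / t := fun j => by
    have := he (.inr (.inr (.inl j))); rw [mvb] at this; rw [this]; field_simp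
  have ec : ∀ j, x (.inr (.inr (.inr j))) = x (.inl 6) / t := fun j => by
    have := he (.inr (.inr (.inr j))); rw [mvc] at this; rw [this]; field_simp
  have e0 := he (.inl 0)
  have e1 := he (.inl 1)
  have e2 := he (.inl 2)
  have e3 := he (.inl 3)
  have e4 := he (.inl 4)
  have e5 := he (.inl 5)
  have e6 := he (.inl 6)
  rw [mv0] at e0
  rw [mv1] at e1
  rw [mv2] at e2
  rw [mv3] at e3
  rw [mv4] at e4
  rw [mv5] at e5
  rw [mv6] at e6
  simp only [ea, eb, ec, Finset.sum_const, Finset.card_univ, Fintype.card_fin, nsmul_eq_mul]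
    at e0 e3 e6
  have f1 : x (.inl 1) = (t * x (.inl 0) + x (.inl 3)) / (t^2-1) := by
    rw [eq_div_iff h1]; linear_combination -t * e1 - e2
  have f2 : x (.inl 2) = (t * x (.inl 3) + x (.inl 0)) / (t^2-1) := by
    rw [eq_div_iff h1]; linear_combination -t * e2 - e1
  have f4 : x (.inl 4) = (t * x (.inl 3) + x (.inl 6)) / (t^2-1) := by
    rw [eq_div_iff h1]; linear_combination -t * e4 - e5
  have f5 : x (.inl 5) = (t * x (.inl 6) + x (.inl 3)) / (t^2-1) := by
    rw [eq_div_iff h1]; linear_combination -t * e5 - e4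
  refine ⟨x (.inl 0), x (.inl 3), x (.inl 6), ?_, ?_, ?_, ?_⟩
  · rintro ⟨z0, z3, z6⟩
    apply hx
    simp only [z0, z3, z6, mul_zero, add_zero, zero_div] at f1 f2 f4 f5 ea eb ec
    funext i
    rcases i with i | i | i | i
    · fin_cases i <;> simp [*]
    · simp [ea]
    · simp [eb]
    · simp [ec]
  · rw [f1] at e0
    linear_combination -e0
  · rw [f5] at e6
    linear_combination -e6
  · rw [f2, f4] at e3
    linear_combination -e3

lemma main_aux (a b : ℕ) (ha : 1 ≤ a) (hb : a ≤ b + 1) :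
    specRad (G2graph a b a) < specRad (G2graph a (b + 1) (a - 1)) := by
  have ht := one_lt_specRad_G2 a b a
  obtain ⟨p, q, p', hne, h1, h2, h3⟩ := eig_G2 a b a _ ht rfl
  generalize specRad (G2graph a b a) = t at *
  have hd : 0 < t^2 - 1 := by nlinarith
  have hab : (a : ℝ) ≤ b + 1 := by exact_mod_cast hb
  have hac : ((a - 1 : ℕ) : ℝ) = a - 1 := by push_cast [ha]; ring
  have ht0 : 0 < t := by linarith
  set P : ℝ := t - a / t - t / (t^2-1) with hP
  set Q : ℝ := t - b / t - 2 * t / (t^2-1) with hQ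
  rcases le_or_gt P 0 with hP0 | hP0
  · set K : ℝ := |Q| + 1
    have hK : 0 < K := by positivity
    have hQK : Q ≤ K := by linarith [le_abs_self Q]
    apply lt_specRad_G2' a (b+1) (a-1) t 1 (1 / ((t^2-1) * K)) 0 ht
    rw [← hP]
    have hQ' : t - ((b+1 : ℕ) : ℝ) / t - 2 * t / (t^2-1) = Q - 1 / t := by
      rw [hQ]; push_cast; ring
    rw [hQ']
    have ht1 : 0 < 1 / t := by positivity
    have e : -P * 1^2 - (t - ((a-1 : ℕ) : ℝ) / t - t / (t^2-1)) * 0^2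
      - (Q - 1/t) * (1 / ((t^2-1) * K))^2 + 2 * (1 + 0) * (1 / ((t^2-1) * K)) / (t^2-1)
      = -P + (2 * K - (Q - 1/t)) * (1 / ((t^2-1) * K))^2 := by
      field_simp
      ring
    rw [e]
    have : 0 < (2 * K - (Q - 1/t)) * (1 / ((t^2-1) * K))^2 := by
      apply mul_pos
      · linarith
      · positivity
    linarith
  · have hpp : p = p' := by
      have : P * p = P * p' := by rw [h1, h2]
      exact mul_left_cancel₀ hP0.ne' this
    subst hpp
    have hq : q ≠ 0 := by
      rintro rfl
      have : P * p = 0 := by rw [h1]; simp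
      have : p = 0 := by simpa [hP0.ne'] using this
      exact hne ⟨this, rfl, this⟩
    have hpq : p = q * (1 / (P * (t^2-1))) := by
      field_simp at h1 ⊢
      linarith
    set m : ℝ := 1 / (P * (t^2-1)) with hm
    have hm0 : 0 < m := by positivity
    have k1 : P * m = 1 / (t^2-1) := by rw [hm]; field_simp
    have k2 : Q = 2 * m / (t^2-1) := by
      have : Q * q = (2 * m / (t^2-1)) * q := by rw [h3, hpq]; ring
      exact mul_right_cancel₀ hq this
    have hm1 : m < 1 := by
      by_contra hc
      push Not at hc
      have c1 : P ≤ 1 / (t^2-1) := by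
        rw [← k1]; nlinarith
      have c2 : 2 / (t^2-1) ≤ Q := by
        rw [k2]; gcongr; linarith
      have c3 : 1/(t^2-1) + t/(t^2-1) ≤ (a - b) / t := by
        have : (a - b : ℝ) / t = Q - P + t/(t^2-1) := by rw [hP, hQ]; ring
        rw [this]
        have : 2/(t^2-1) = 1/(t^2-1) + 1/(t^2-1) := by ring
        linarith
      have c4 : ((a : ℝ) - b) / t ≤ 1 / t := by gcongr; linarith
      have c5 : 1 / t < 1/(t^2-1) + t/(t^2-1) := by
        rw [← add_div, div_lt_div_iff₀ ht0 hd]; nlinarith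
      linarith
    apply lt_specRad_G2' a (b+1) (a-1) t m 1 m ht
    have e : -(t - (a:ℝ) / t - t / (t^2-1)) * m^2 - (t - ((a-1 : ℕ) : ℝ) / t - t / (t^2-1)) * m^2
      - (t - ((b+1 : ℕ) : ℝ) / t - 2 * t / (t^2-1)) * 1^2 + 2 * (m + m) * 1 / (t^2-1)
      = (1 - m^2) / t - 2 * (P * m) * m - Q + 4 * m / (t^2-1) := by
      rw [hac, hP, hQ]; push_cast; ring
    rw [e, k1, k2]
    have : 0 < (1 - m^2) / t := by
      apply div_pos _ ht0
      nlinarith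
    have e2 : (1 - m^2) / t - 2 * (1 / (t^2-1)) * m - 2 * m / (t^2-1) + 4 * m / (t^2-1)
      = (1 - m^2) / t := by ring
    rw [e2]; exact this

theorem specRad_G2_asymmetric_gt (a n : ℕ) (ha : 1 ≤ a) (hn : 3 * a + 6 ≤ n) :
    specRad (G2graph a (n - 2 * a - 7) a) <
      specRad (G2graph a (n - 2 * a - 6) (a - 1)) := by
  have h : n - 2 * a - 6 = (n - 2 * a - 7) + 1 := by omega
  rw [h]
  exact main_aux a _ ha (by omega)
end

section
/- Let a ≥ 4 and n be integers with 2a + 7 ≤ n ≤ 3a + 3. Then ρ(G_2(a, n−2a−7, a)) > ρ(G_2(a−1, n−2a−5, a−1)). -/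
open SimpleGraph

/-- A symmetric test vector on the vertices of `G₂(a,b,a)`. -/
noncomputable def tvec (a b : ℕ) (x0 x1 x2 x3 l0 l3 : ℝ) :
    Fin 7 ⊕ (Fin a ⊕ Fin b ⊕ Fin a) → ℝ :=
  Sum.elim ![x0, x1, x2, x3, x2, x1, x0]
    (Sum.elim (fun _ => l0) (Sum.elim (fun _ => l3) (fun _ => l0)))

lemma tvec_mulVec (a b : ℕ) (x0 x1 x2 x3 l0 l3 : ℝ) :
    (adjMat (G2graph a b a)).mulVec (tvec a b x0 x1 x2 x3 l0 l3) =
      tvec a b (x1 + a * l0) (x0 + x2) (x1 + x3) (2 * x2 + b * l3) x0 x3 := by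
  funext i
  rcases i with i | i | i | i
  · fin_cases i <;>
    simp [Matrix.mulVec, dotProduct, adjMat, G2graph, tvec, Fintype.sum_sum_type,
      Fin.sum_univ_seven, SimpleGraph.fromRel_adj] <;> ring
  all_goals
    simp [Matrix.mulVec, dotProduct, adjMat, G2graph, tvec, Fintype.sum_sum_type,
      Fin.sum_univ_seven, SimpleGraph.fromRel_adj]

lemma specRad_le_of_pos {V : Type*} [Fintype V] [DecidableEq V] (G : SimpleGraph V)
    (x : V → ℝ) (hx : ∀ i, 0 < x i) (l : ℝ) (hl : 0 ≤ l)
    (h : ∀ i, (adjMat G).mulVec x i ≤ l * x i) : specRad G ≤ l := by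
  apply Real.sSup_le _ hl
  intro t ht
  rw [← Matrix.spectrum_toLin', ← Module.End.hasEigenvalue_iff_mem_spectrum] at ht
  obtain ⟨v, hv⟩ := ht.exists_hasEigenvector
  have hv1 : (adjMat G).mulVec v = t • v := by
    have := hv.apply_eq_smul
    rwa [Matrix.toLin'_apply] at this
  obtain ⟨j, hj⟩ := Function.ne_iff.mp hv.2
  simp only [Pi.zero_apply] at hj
  obtain ⟨i, -, hi⟩ := Finset.exists_max_image Finset.univ (fun i => |v i| / x i)
    ⟨j, Finset.mem_univ j⟩
  set M := |v i| / x i with hM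
  have hMpos : 0 < M := lt_of_lt_of_le (div_pos (abs_pos.mpr hj) (hx j)) (hi j (Finset.mem_univ j))
  have hvi : |v i| = M * x i := by rw [hM]; field_simp [(hx i).ne']
  have hle : ∀ k, |v k| ≤ M * x k := fun k => by
    have := hi k (Finset.mem_univ k)
    rwa [div_le_iff₀ (hx k)] at this
  have hA : ∀ i k, 0 ≤ adjMat G i k := fun i k => by
    simp only [adjMat, Matrix.of_apply]; split_ifs <;> norm_num
  have e : t * v i = ∑ k, adjMat G i k * v k := by
    have := congrFun hv1 i
    simp only [Matrix.mulVec, dotProduct, Pi.smul_apply, smul_eq_mul] at this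
    exact this.symm
  have h1 : |t| * |v i| ≤ M * (l * x i) := by
    rw [← abs_mul, e]
    calc |∑ k, adjMat G i k * v k| ≤ ∑ k, |adjMat G i k * v k| := Finset.abs_sum_le_sum_abs _ _
      _ ≤ ∑ k, M * (adjMat G i k * x k) := by
        apply Finset.sum_le_sum
        intro k _
        rw [abs_mul, abs_of_nonneg (hA i k)]
        nlinarith [mul_le_mul_of_nonneg_left (hle k) (hA i k)]
      _ = M * (adjMat G).mulVec x i := by rw [← Finset.mul_sum]; rfl
      _ ≤ _ := mul_le_mul_of_nonneg_left (h i) hMpos.le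
  rw [hvi] at h1
  have h2 : 0 < M * x i := mul_pos hMpos (hx i)
  have h3 : |t| ≤ l := le_of_mul_le_mul_right (by linarith) h2
  exact (le_abs_self t).trans h3

lemma le_specRad {V : Type*} [Fintype V] [DecidableEq V] (G : SimpleGraph V)
    (x : V → ℝ) (hx : x ≠ 0) (l : ℝ)
    (h : (adjMat G).mulVec x = l • x) : l ≤ specRad G := by
  apply le_csSup
  · rw [← Matrix.spectrum_toLin']
    exact (Module.End.finite_spectrum _).bddAbove
  · rw [← Matrix.spectrum_toLin', ← Module.End.hasEigenvalue_iff_mem_spectrum]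
    refine Module.End.hasEigenvalue_of_hasEigenvector (x := x) ⟨?_, hx⟩
    rw [Module.End.mem_eigenspace_iff, Matrix.toLin'_apply, h]

/-- The quotient polynomial of `G₂(a,b,a)` in the square of the eigenvalue. -/
noncomputable def quotPoly (a b m : ℝ) : ℝ :=
  (m - b) * ((m - 1) * (m - a) - m) - 2 * m * (m - a - 1)

lemma upper (a b : ℕ) (m : ℝ) (hm : 0 < m) (h1 : (a : ℝ) + 1 < m)
    (h2 : 0 < (m - 1) * (m - a) - m) (h3 : 0 ≤ quotPoly a b m) :
    specRad (G2graph a b a) ≤ √m := by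
  have hl : 0 < √m := Real.sqrt_pos.mpr hm
  have hs : √m * √m = m := Real.mul_self_sqrt hm.le
  set l := √m with hldef
  apply specRad_le_of_pos _
    (tvec a b l (m - a) (l * (m - a - 1)) ((m - 1) * (m - a) - m) 1
      (((m - 1) * (m - a) - m) / l)) _ _ hl.le
  · rw [tvec_mulVec]
    have key : 2 * (l * (m - a - 1)) + b * (((m - 1) * (m - a) - m) / l)
        ≤ l * ((m - 1) * (m - a) - m) := by
      rw [← sub_nonneg]
      have : l * ((m - 1) * (m - a) - m) -
          (2 * (l * (m - a - 1)) + b * (((m - 1) * (m - a) - m) / l)) = quotPoly a b m / l := by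
        unfold quotPoly
        field_simp
        rw [pow_two, hs]; ring
      rw [this]; positivity
    have e1 : l * (l * (m - a - 1)) = m * (m - a - 1) := by rw [← mul_assoc, hs]
    have e2 : l * (((m - 1) * (m - a) - m) / l) = (m - 1) * (m - a) - m := by field_simp
    intro i
    rcases i with i | i | i | i
    · fin_cases i <;> simp [tvec] <;> nlinarith
    all_goals simp [tvec] <;> nlinarith
  · have := div_pos h2 hl
    have h4 : 0 < l * (m - a - 1) := mul_pos hl (by linarith)
    intro i
    rcases i with i | i | i | i
    · fin_cases i <;> simp [tvec] <;> nlinarith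
    all_goals simp [tvec] <;> nlinarith

lemma lower (a b : ℕ) (m : ℝ) (hm : 0 < m) (h3 : quotPoly a b m = 0) :
    √m ≤ specRad (G2graph a b a) := by
  have hl : 0 < √m := Real.sqrt_pos.mpr hm
  have hs : √m * √m = m := Real.mul_self_sqrt hm.le
  set l := √m with hldef
  apply le_specRad _
    (tvec a b l (m - a) (l * (m - a - 1)) ((m - 1) * (m - a) - m) 1
      (((m - 1) * (m - a) - m) / l))
  · intro h
    have := congrFun h (Sum.inl 0)
    simp [tvec] at this
    exact hl.ne' this
  · rw [tvec_mulVec]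
    have key : 2 * (l * (m - a - 1)) + b * (((m - 1) * (m - a) - m) / l)
        = l * ((m - 1) * (m - a) - m) := by
      rw [eq_comm, ← sub_eq_zero]
      have : l * ((m - 1) * (m - a) - m) -
          (2 * (l * (m - a - 1)) + b * (((m - 1) * (m - a) - m) / l)) = quotPoly a b m / l := by
        unfold quotPoly
        field_simp
        rw [pow_two, hs]; ring
      rw [this, h3, zero_div]
    have e1 : l * (l * (m - a - 1)) = m * (m - a - 1) := by rw [← mul_assoc, hs]
    have e2 : l * (((m - 1) * (m - a) - m) / l) = (m - 1) * (m - a) - m := by field_simp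
    funext i
    rcases i with i | i | i | i
    · fin_cases i <;> simp [tvec] <;> linarith
    all_goals simp [tvec] <;> linarith

lemma lower_strict (a b : ℕ) (m : ℝ) (hm : 0 < m) (hab : b ≤ a) (hma : m ≤ 4 * a + 10)
    (h3 : quotPoly a b m < 0) :
    √m < specRad (G2graph a b a) := by
  have hc : Continuous (quotPoly a b) := by unfold quotPoly; fun_prop
  have hbig : 0 ≤ quotPoly a b (4 * a + 10) := by
    unfold quotPoly
    have hab' : (b : ℝ) ≤ a := by exact_mod_cast hab
    have ha : (0 : ℝ) ≤ a := by positivity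
    have : (0 : ℝ) ≤ ((4 * a + 10) - 1) * ((4 * a + 10) - a) - (4 * a + 10) := by nlinarith
    nlinarith [mul_le_mul_of_nonneg_right
      (show (3 * a + 10 : ℝ) ≤ 4 * a + 10 - b by linarith) this, pow_nonneg ha 2, pow_nonneg ha 3]
  obtain ⟨u, ⟨hu1, hu2⟩, hu⟩ := intermediate_value_Icc hma hc.continuousOn ⟨h3.le, hbig⟩
  have hne : m ≠ u := by rintro rfl; exact absurd hu h3.ne
  have hlt : m < u := lt_of_le_of_ne hu1 hne
  exact (Real.sqrt_lt_sqrt hm.le hlt).trans_le (lower a b u (hm.trans hlt) hu)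

theorem specRad_G2_compare_small_n (a n : ℕ) (ha : 4 ≤ a)
    (hn1 : 2 * a + 7 ≤ n) (hn2 : n ≤ 3 * a + 3) :
    specRad (G2graph (a - 1) (n - 2 * a - 5) (a - 1)) <
      specRad (G2graph a (n - 2 * a - 7) a) := by
  obtain ⟨k, rfl⟩ : ∃ k, a = k + 1 := ⟨a - 1, by omega⟩
  obtain ⟨b, rfl⟩ : ∃ b, n = 2 * (k + 1) + 7 + b := ⟨n - (2 * (k + 1) + 7), by omega⟩
  have e1 : 2 * (k + 1) + 7 + b - 2 * (k + 1) - 5 = b + 2 := by omega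
  have e2 : 2 * (k + 1) + 7 + b - 2 * (k + 1) - 7 = b := by omega
  rw [e1, e2, Nat.add_sub_cancel]
  have hk : 3 ≤ k := by omega
  have hb : b + 3 ≤ k := by omega
  have hb' : (b : ℝ) + 3 ≤ k := by exact_mod_cast hb
  rcases Nat.lt_or_ge 3 k with h4 | h4
  · have hk' : (4 : ℝ) ≤ k := by exact_mod_cast h4
    refine (upper k (b + 2) (k + 2) (by positivity) (by linarith) (by nlinarith) ?_).trans_lt
      (lower_strict (k + 1) b (k + 2) (by positivity) (by omega) (by push_cast; linarith) ?_)
    · unfold quotPoly; push_cast; nlinarith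
    · unfold quotPoly; push_cast; nlinarith
  · obtain rfl : k = 3 := by omega
    obtain rfl : b = 0 := by omega
    refine (upper 3 (0 + 2) (21 / 4) (by norm_num) (by norm_num) (by norm_num) ?_).trans_lt
      (lower_strict (3 + 1) 0 (21 / 4) (by norm_num) (by omega) (by norm_num) ?_)
    · unfold quotPoly; norm_num
    · unfold quotPoly; norm_num
end

section
/- Let a ≥ 2 and n be integers with n ≥ 3a + 5. Then ρ(G_2(a−1, n−2a−5, a−1)) > ρ(G_2(a, n−2a−7, a)). -/
open SimpleGraph

/-- An eigenvector gives a spectrum element. -/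
lemma mem_spec_of_vec {V : Type*} [Fintype V] [DecidableEq V] (M : Matrix V V ℝ)
    (f : V → ℝ) (hf : f ≠ 0) (s : ℝ) (h : M.mulVec f = s • f) : s ∈ spectrum ℝ M := by
  rw [← Matrix.spectrum_toLin', ← Module.End.hasEigenvalue_iff_mem_spectrum]
  apply Module.End.hasEigenvalue_of_hasEigenvector (x := f)
  rw [Module.End.hasEigenvector_iff]
  refine ⟨?_, hf⟩
  rw [Module.End.mem_eigenspace_iff]
  simpa using h

lemma spec_finite {V : Type*} [Fintype V] [DecidableEq V] (M : Matrix V V ℝ) :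
    (spectrum ℝ M).Finite := by
  rw [← Matrix.spectrum_toLin']
  exact Module.End.finite_spectrum _

/-- A positive eigenvector of a nonnegative matrix bounds all real eigenvalues. -/
lemma spec_le_of_pos {V : Type*} [Fintype V] [DecidableEq V] (M : Matrix V V ℝ)
    (hM : ∀ i j, 0 ≤ M i j) (f : V → ℝ) (hf : ∀ i, 0 < f i) (s : ℝ)
    (h : M.mulVec f = s • f) (μ : ℝ) (hμ : μ ∈ spectrum ℝ M) : μ ≤ s := by
  rw [← Matrix.spectrum_toLin', ← Module.End.hasEigenvalue_iff_mem_spectrum] at hμ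
  obtain ⟨w, hw⟩ := hμ.exists_hasEigenvector
  have hw0 : w ≠ 0 := hw.2
  have hw1 : M.mulVec w = μ • w := by simpa using hw.apply_eq_smul
  obtain ⟨k, hk⟩ := Function.ne_iff.mp hw0
  obtain ⟨i, -, hi⟩ := Finset.exists_max_image Finset.univ (fun i => |w i| / f i) ⟨k, Finset.mem_univ k⟩
  have hk0 : 0 < |w k| / f k := div_pos (abs_pos.mpr hk) (hf k)
  have hipos : 0 < |w i| / f i := lt_of_lt_of_le hk0 (hi k (Finset.mem_univ k))
  set r := |w i| / f i with hr
  have hwi : |w i| = r * f i := by rw [hr]; field_simp [(hf i).ne']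
  have hall : ∀ j, |w j| ≤ r * f j := fun j => by
    have := hi j (Finset.mem_univ j)
    exact (div_le_iff₀ (hf j)).mp this
  have e1 : ∑ j, M i j * w j = μ * w i := by
    have := congrFun hw1 i
    simpa [Matrix.mulVec, dotProduct] using this
  have e2 : ∑ j, M i j * f j = s * f i := by
    have := congrFun h i
    simpa [Matrix.mulVec, dotProduct] using this
  have e3 : |μ| * |w i| ≤ r * (s * f i) := by
    rw [← abs_mul, ← e1, ← e2, Finset.mul_sum]
    refine (Finset.abs_sum_le_sum_abs _ _).trans (Finset.sum_le_sum fun j _ => ?_)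
    rw [abs_mul, abs_of_nonneg (hM i j)]
    have := mul_le_mul_of_nonneg_left (hall j) (hM i j)
    linarith
  rw [hwi] at e3
  have hp : 0 < r * f i := mul_pos hipos (hf i)
  have : |μ| ≤ s := by
    by_contra hc
    push Not at hc
    nlinarith [mul_lt_mul_of_pos_right hc hp]
  exact (le_abs_self μ).trans this

lemma aux_mul (m α β : ℝ) (hm : 0 < m) (h1 : (m + 20) * (m + 20) ≤ α)
    (h2 : (m + 20) * (m + 20) ≤ β) : 0 ≤ α * β - 2 * (2 * m + 20) := by
  have h5 : m + 20 ≤ (m + 20) * (m + 20) := by nlinarith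
  have h6 : m + 20 ≤ α := h5.trans h1
  have h7 : m + 20 ≤ β := h5.trans h2
  have h8 : (m + 20) * (m + 20) ≤ α * β :=
    mul_le_mul h6 h7 (by linarith) (by linarith)
  nlinarith

/-- Candidate symmetric eigenvector. -/
noncomputable def g2vec (a b : ℕ) (x p q y l m : ℝ) : Fin 7 ⊕ (Fin a ⊕ Fin b ⊕ Fin a) → ℝ :=
  Sum.elim ![x, p, q, y, q, p, x] (Sum.elim (fun _ => l) (Sum.elim (fun _ => m) (fun _ => l)))

set_option maxRecDepth 4000 in
set_option maxHeartbeats 1000000 in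
lemma g2_mulVec (a b : ℕ) (x p q y l m s : ℝ)
    (h1 : s * x = a * l + p) (h2 : s * p = x + q) (h3 : s * q = p + y)
    (h4 : s * y = b * m + 2 * q) (h5 : s * l = x) (h6 : s * m = y) :
    (adjMat (G2graph a b a)).mulVec (g2vec a b x p q y l m) = s • g2vec a b x p q y l m := by
  funext v
  rcases v with i | i | i | i
  · fin_cases i <;>
    simp [Matrix.mulVec, dotProduct, adjMat, G2graph, g2vec, Fin.sum_univ_seven] <;>
    linarith
  all_goals
    simp [Matrix.mulVec, dotProduct, adjMat, G2graph, g2vec]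
    linarith

lemma g2_eig (a b : ℕ) (s : ℝ)
    (hF : ((s^2 - a) * (s^2 - 1) - s^2) * ((s^2 - b) * (s^2 - 1) - 2 * s^2) - 2 * s^2 = 0)
    (A : ℝ) (hA : A = (s^2 - a) * (s^2 - 1) - s^2) :
    (adjMat (G2graph a b a)).mulVec (g2vec a b (s^2 * (s^2-1)) (s * (s^2 + A)) (s^2 * (1 + A))
      (A * s * (s^2-1)) (s * (s^2-1)) (A * (s^2-1))) =
    s • g2vec a b (s^2 * (s^2-1)) (s * (s^2 + A)) (s^2 * (1 + A))
      (A * s * (s^2-1)) (s * (s^2-1)) (A * (s^2-1)) := by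
  apply g2_mulVec
  · rw [hA]; ring
  · ring
  · ring
  · rw [← hA] at hF; linear_combination hF
  · ring
  · ring

set_option maxHeartbeats 1000000 in
theorem specRad_G2_compare_large_n (a n : ℕ) (ha : 2 ≤ a) (hn : 3 * a + 5 ≤ n) :
    specRad (G2graph a (n - 2 * a - 7) a) <
      specRad (G2graph (a - 1) (n - 2 * a - 5) (a - 1)) := by
  obtain ⟨b, rfl⟩ : ∃ b, n = b + 2 * a + 7 := ⟨n - 2 * a - 7, by omega⟩
  obtain ⟨c, rfl⟩ : ∃ c, a = c + 1 := ⟨a - 1, by omega⟩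
  have e1 : b + 2 * (c + 1) + 7 - 2 * (c + 1) - 7 = b := by omega
  have e2 : b + 2 * (c + 1) + 7 - 2 * (c + 1) - 5 = b + 2 := by omega
  have e3 : c + 1 - 1 = c := by omega
  rw [e1, e2, e3]
  have hbc : c ≤ b + 1 := by omega
  have hbcR : (c : ℝ) ≤ b + 1 := by exact_mod_cast hbc
  have hc0 : (1 : ℝ) ≤ c := by exact_mod_cast (by omega : 1 ≤ c)
  have hb0 : (0 : ℝ) ≤ b := Nat.cast_nonneg b
  -- the factors
  let A : ℝ → ℝ := fun t => (t - (c + 1)) * (t - 1) - t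
  let B : ℝ → ℝ := fun t => (t - b) * (t - 1) - 2 * t
  obtain ⟨t0, ht0, hA0, hF0⟩ : ∃ t0 : ℝ, (c : ℝ) + 1 < t0 ∧ 0 < A t0 ∧ A t0 * B t0 - 2 * t0 = 0 := by
    set u := √(((c:ℝ) + 1) ^ 2 + 4) with hu
    set v := √((b:ℝ) ^ 2 + 2 * b + 9) with hv
    have hu2 : u ^ 2 = ((c:ℝ) + 1) ^ 2 + 4 := Real.sq_sqrt (by positivity)
    have hv2 : v ^ 2 = (b:ℝ) ^ 2 + 2 * b + 9 := Real.sq_sqrt (by positivity)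
    have hu0 : (c:ℝ) + 1 < u := by rw [hu]; apply Real.lt_sqrt_of_sq_lt; linarith
    have hv0 : 0 < v := Real.sqrt_pos.mpr (by positivity)
    set rA := ((c:ℝ) + 3 + u) / 2 with hrA
    set rB := ((b:ℝ) + 3 + v) / 2 with hrB
    have fA : ∀ t, A t = (t - rA) * (t - rA + u) := fun t => by
      simp only [A, hrA]; linear_combination (1/4) * hu2
    have fB : ∀ t, B t = (t - rB) * (t - rB + v) := fun t => by
      simp only [B, hrB]; linear_combination (1/4) * hv2
    have hm : A (max rA rB) * B (max rA rB) = 0 := by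
      rcases max_choice rA rB with h | h <;> rw [h, fA, fB] <;> ring
    have hrA1 : (c:ℝ) + 1 < rA := by rw [hrA]; linarith
    have hmA : rA ≤ max rA rB := le_max_left _ _
    have hmB : rB ≤ max rA rB := le_max_right _ _
    set m := max rA rB with hmdef
    have hcont : ContinuousOn (fun t => A t * B t - 2 * t) (Set.Icc m (2 * m + 20)) := by
      simp only [A, B]; fun_prop
    have hmle : m ≤ 2 * m + 20 := by linarith
    have hmpos : 0 < m := by linarith
    have hmem : (0:ℝ) ∈ Set.Icc (A m * B m - 2 * m) (A (2*m+20) * B (2*m+20) - 2 * (2*m+20)) := by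
      constructor
      · rw [hm]; linarith
      · have h1 : (m + 20) * (m + 20) ≤ A (2*m+20) := by
          rw [fA]; apply mul_le_mul <;> linarith
        have h2 : (m + 20) * (m + 20) ≤ B (2*m+20) := by
          rw [fB]; apply mul_le_mul <;> linarith
        generalize A (2*m+20) = α at h1 ⊢
        generalize B (2*m+20) = β at h2 ⊢
        exact aux_mul m α β hmpos h1 h2
    obtain ⟨t, ⟨htm, -⟩, ht⟩ := intermediate_value_Icc hmle hcont hmem
    simp only at ht
    have hne : A t ≠ 0 := by
      intro h; rw [h] at ht; linarith
    have hge : 0 ≤ A t := by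
      rw [fA]; apply mul_nonneg <;> linarith
    exact ⟨t, by linarith, lt_of_le_of_ne hge hne.symm, ht⟩
  -- the second polynomial is negative at t0
  let FF : ℝ → ℝ := fun t => ((t - c) * (t - 1) - t) * ((t - (b + 2)) * (t - 1) - 2 * t) - 2 * t
  have hneg : FF t0 < 0 := by
    have : FF t0 = (A t0 * B t0 - 2 * t0) + (t0 - 1)^2 * (2 * c - b - t0) := by
      simp only [FF, A, B]; ring
    rw [this, hF0]
    have h1 : 0 < (t0 - 1)^2 := by apply pow_pos; linarith
    nlinarith
  obtain ⟨t1, ht1, hF1⟩ : ∃ t1, t0 < t1 ∧ FF t1 = 0 := by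
    set T := t0 + b + c + 20 with hT
    have hle : t0 ≤ T := by linarith
    have hcont : ContinuousOn FF (Set.Icc t0 T) := by
      simp only [FF]; fun_prop
    have hmem : (0:ℝ) ∈ Set.Icc (FF t0) (FF T) := by
      refine ⟨hneg.le, ?_⟩
      have hT20 : (20:ℝ) ≤ T := by linarith
      have h1 : T ≤ (T - c) * (T - 1) - T := by
        have : 20 * (T - 1) ≤ (T - c) * (T - 1) := by
          apply mul_le_mul_of_nonneg_right <;> linarith
        linarith
      have h2 : T ≤ (T - (b + 2)) * (T - 1) - 2 * T := by
        have : 18 * (T - 1) ≤ (T - (b + 2)) * (T - 1) := by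
          apply mul_le_mul_of_nonneg_right <;> linarith
        linarith
      have h3 := mul_le_mul h1 h2 (by linarith) (by linarith)
      simp only [FF]
      nlinarith
    obtain ⟨t, ⟨htm, -⟩, ht⟩ := intermediate_value_Icc hle hcont hmem
    refine ⟨t, lt_of_le_of_ne htm ?_, ht⟩
    rintro rfl
    linarith
  have hs0 : (√t0)^2 = t0 := Real.sq_sqrt (by linarith)
  have hs1 : (√t1)^2 = t1 := Real.sq_sqrt (by linarith)
  have hp0 : 0 < √t0 := Real.sqrt_pos.mpr (by linarith)
  have hp1 : 0 < √t1 := Real.sqrt_pos.mpr (by linarith)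
  have E0 := g2_eig (c + 1) b (√t0) (by rw [hs0]; push_cast; exact hF0) (A t0)
    (by rw [hs0]; push_cast; rfl)
  have E1 := g2_eig c (b + 2) (√t1) (by rw [hs1]; push_cast; exact hF1) _ rfl
  rw [hs0] at E0
  rw [hs1] at E1
  have hpos : ∀ i, 0 < g2vec (c + 1) b (t0 * (t0 - 1)) (√t0 * (t0 + A t0)) (t0 * (1 + A t0))
      (A t0 * √t0 * (t0-1)) (√t0 * (t0-1)) (A t0 * (t0-1)) i := by
    have k1 : 0 < t0 := by linarith
    have k2 : 0 < t0 - 1 := by linarith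
    rintro (i | i | i | i)
    · fin_cases i <;> simp [g2vec] <;> positivity
    all_goals simp only [g2vec, Sum.elim_inl, Sum.elim_inr]; positivity
  have hup : specRad (G2graph (c + 1) b (c + 1)) ≤ √t0 := by
    apply csSup_le
    · refine ⟨√t0, mem_spec_of_vec _ _ ?_ _ E0⟩
      intro h
      have := hpos (Sum.inl 0)
      rw [h] at this
      exact lt_irrefl _ this
    · intro μ hμ
      refine spec_le_of_pos _ ?_ _ hpos _ E0 μ hμ
      intro i j
      simp only [adjMat, Matrix.of_apply]
      split_ifs <;> norm_num
  have hlow : √t1 ≤ specRad (G2graph c (b + 2) c) := by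
    apply le_csSup (spec_finite _).bddAbove
    refine mem_spec_of_vec _ _ ?_ _ E1
    intro h
    have h0 := congrFun h (Sum.inl 0)
    have : t1 * (t1 - 1) = 0 := by simpa [g2vec] using h0
    have : 0 < t1 * (t1 - 1) := mul_pos (by linarith) (by linarith)
    linarith
  exact lt_of_le_of_lt hup (lt_of_lt_of_le (Real.sqrt_lt_sqrt (by linarith) ht1) hlow)
end

section
/- Let H be a finite simple graph on m vertices and let Φ(G,x) = det(xI − A(G)) denote the characteristic polynomial of the adjacency matrix of a graph G. Then for every nonzero real (or complex) number λ, Φ(H∘K_1, λ) = λ^m · Φ(H, λ − 1/λ). -/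
open SimpleGraph

/-- The corona `H ∘ K₁`: each vertex `v` of `H` (copied as `Sum.inl v`) gets a new
pendant neighbour `Sum.inr v`. -/
def corona {V : Type*} (H : SimpleGraph V) : SimpleGraph (V ⊕ V) :=
  SimpleGraph.fromRel (fun x y =>
    (∃ u v, x = Sum.inl u ∧ y = Sum.inl v ∧ H.Adj u v) ∨
    (∃ v, x = Sum.inl v ∧ y = Sum.inr v))

theorem charpoly_corona {V : Type*} [Fintype V] [DecidableEq V]
    (H : SimpleGraph V) (lam : ℝ) (hlam : lam ≠ 0) :
    Matrix.det (lam • (1 : Matrix (V ⊕ V) (V ⊕ V) ℝ) - adjMat (corona H)) =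
      lam ^ (Fintype.card V) *
        Matrix.det ((lam - 1 / lam) • (1 : Matrix V V ℝ) - adjMat H) := by
  have hll : ∀ u v, (corona H).Adj (Sum.inl u) (Sum.inl v) ↔ H.Adj u v := by
    intro u v
    simp only [corona, SimpleGraph.fromRel_adj]
    constructor
    · rintro ⟨_, (⟨a, b, h1, h2, h⟩ | ⟨a, h1, h2⟩) | (⟨a, b, h1, h2, h⟩ | ⟨a, h1, h2⟩)⟩
      · cases h1; cases h2; exact h
      · cases h2
      · cases h1; cases h2; exact h.symm
      · cases h2
    · intro h
      exact ⟨fun e => h.ne (Sum.inl.inj e), Or.inl (Or.inl ⟨u, v, rfl, rfl, h⟩)⟩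
  have hlr : ∀ u v, (corona H).Adj (Sum.inl u) (Sum.inr v) ↔ u = v := by
    intro u v
    simp [corona, SimpleGraph.fromRel_adj, eq_comm]
  have hrl : ∀ u v, (corona H).Adj (Sum.inr u) (Sum.inl v) ↔ u = v := by
    intro u v
    rw [SimpleGraph.adj_comm, hlr, eq_comm]
  have hrr : ∀ u v, ¬ (corona H).Adj (Sum.inr u) (Sum.inr v) := by
    intro u v
    simp [corona, SimpleGraph.fromRel_adj]
  have hblock : lam • (1 : Matrix (V ⊕ V) (V ⊕ V) ℝ) - adjMat (corona H) =
      Matrix.fromBlocks (lam • (1 : Matrix V V ℝ) - adjMat H) (-1) (-1)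
        (lam • (1 : Matrix V V ℝ)) := by
    ext (i | i) (j | j)
    · by_cases h : H.Adj i j
      · have hc := (hll i j).2 h
        simp [adjMat, h, hc, Matrix.one_apply]
      · have hc := mt (hll i j).1 h
        simp [adjMat, h, hc, Matrix.one_apply]
    · simp [adjMat, hlr, Matrix.one_apply]
    · simp [adjMat, hrl, Matrix.one_apply]
    · simp [adjMat, hrr, Matrix.one_apply]
  letI : Invertible (lam • (1 : Matrix V V ℝ)) :=
    ⟨lam⁻¹ • 1, by simp [smul_smul, hlam], by simp [smul_smul, hlam]⟩
  have hinv : ⅟(lam • (1 : Matrix V V ℝ)) = lam⁻¹ • 1 := rfl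
  rw [hblock, Matrix.det_fromBlocks₂₂, hinv, Matrix.det_smul, Matrix.det_one, mul_one]
  congr 2
  simp only [Matrix.mul_smul, Matrix.smul_mul, Matrix.mul_one, Matrix.neg_mul, Matrix.mul_neg,
    neg_neg, one_div, sub_smul]
  simp
  abel
end

section
/- Let H be a finite simple graph with at least one vertex. Then the spectral radius of its corona with K_1 satisfies ρ(H∘K_1) = (ρ(H) + √(ρ(H)² + 4))/2. -/
open SimpleGraph

lemma mem_spec_iff_aux {W : Type*} [Fintype W] [DecidableEq W] (A : Matrix W W ℝ) (t : ℝ) :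
    t ∈ spectrum ℝ A ↔ ∃ x : W → ℝ, x ≠ 0 ∧ A.mulVec x = t • x := by
  rw [← Matrix.spectrum_toLin', ← Module.End.hasEigenvalue_iff_mem_spectrum]
  constructor
  · intro h
    obtain ⟨x, hx⟩ := h.exists_hasEigenvector
    refine ⟨x, hx.2, ?_⟩
    have := hx.apply_eq_smul
    rwa [Matrix.toLin'_apply] at this
  · rintro ⟨x, hx0, hx⟩
    apply Module.End.hasEigenvalue_of_hasEigenvector (x := x)
    rw [Module.End.hasEigenvector_iff]
    refine ⟨?_, hx0⟩
    rw [Module.End.mem_eigenspace_iff, Matrix.toLin'_apply, hx]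

lemma corona_adjMat_aux {V : Type*} [Fintype V] [DecidableEq V] (H : SimpleGraph V) :
    adjMat (corona H) = Matrix.fromBlocks (adjMat H) 1 1 0 := by
  classical
  ext i j
  rcases i with i | i <;> rcases j with j | j
  · have : (corona H).Adj (Sum.inl i) (Sum.inl j) ↔ H.Adj i j := by
      simp only [corona, SimpleGraph.fromRel_adj]
      constructor
      · rintro ⟨-, h⟩
        simpa [H.adj_comm j i] using h
      · intro h
        simpa [H.adj_comm j i, h] using h.ne
    simp [adjMat, this]
  · simp [adjMat, corona, Matrix.one_apply, eq_comm]
  · simp [adjMat, corona, Matrix.one_apply, eq_comm]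
  · simp [adjMat, corona]

lemma isGreatest_specRad_aux {V : Type*} [Fintype V] [DecidableEq V] [Nonempty V]
    (H : SimpleGraph V) : IsGreatest (spectrum ℝ (adjMat H)) (specRad H) := by
  have hH : (adjMat H).IsHermitian := by
    ext i j
    have h := H.adj_comm i j
    by_cases hij : H.Adj i j
    · simp [adjMat, hij, h.1 hij]
    · simp [adjMat, hij, mt h.2 hij]
  have hne : (spectrum ℝ (adjMat H)).Nonempty := by
    rw [hH.spectrum_real_eq_range_eigenvalues]
    exact Set.range_nonempty _
  have hf : (spectrum ℝ (adjMat H)).Finite := Matrix.finite_real_spectrum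
  exact ⟨hne.csSup_mem hf, fun x hx => le_csSup hf.bddAbove hx⟩

lemma spec_corona_aux {V : Type*} [Fintype V] [DecidableEq V] (H : SimpleGraph V) (t : ℝ) :
    t ∈ spectrum ℝ (adjMat (corona H)) ↔ t ≠ 0 ∧ t - t⁻¹ ∈ spectrum ℝ (adjMat H) := by
  rw [mem_spec_iff_aux, mem_spec_iff_aux, corona_adjMat_aux]
  constructor
  · rintro ⟨x, hx0, hx⟩
    rw [Matrix.fromBlocks_mulVec] at hx
    have h1 : (adjMat H).mulVec (x ∘ Sum.inl) + x ∘ Sum.inr = t • (x ∘ Sum.inl) := by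
      ext i
      simpa using congrFun hx (Sum.inl i)
    have h2 : x ∘ Sum.inl = t • (x ∘ Sum.inr) := by
      ext i
      simpa using congrFun hx (Sum.inr i)
    have hy : x ∘ Sum.inr ≠ 0 := by
      intro h
      rw [h, smul_zero] at h2
      apply hx0
      ext (i | i)
      · exact congrFun h2 i
      · exact congrFun h i
    have ht : t ≠ 0 := by
      rintro rfl
      rw [zero_smul] at h2
      rw [h2] at h1
      simp at h1
      exact hy h1
    refine ⟨ht, _, hy, ?_⟩
    rw [h2, Matrix.mulVec_smul] at h1
    ext i
    have := congrFun h1 i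
    simp only [Pi.add_apply, Pi.smul_apply, smul_eq_mul] at this ⊢
    field_simp
    linarith
  · rintro ⟨ht, y, hy, h⟩
    refine ⟨Sum.elim (t • y) y, ?_, ?_⟩
    · intro h0
      apply hy
      ext i
      exact congrFun h0 (Sum.inr i)
    · rw [Matrix.fromBlocks_mulVec]
      simp only [Sum.elim_comp_inl, Sum.elim_comp_inr, Matrix.mulVec_smul, h]
      ext (i | i)
      · simp
        field_simp
        ring
      · simp

theorem specRad_corona {V : Type*} [Fintype V] [DecidableEq V] [Nonempty V]
    (H : SimpleGraph V) :
    specRad (corona H) = (specRad H + Real.sqrt (specRad H ^ 2 + 4)) / 2 := by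
  have hG := isGreatest_specRad_aux H
  have hC := isGreatest_specRad_aux (corona H)
  refine hC.unique ?_
  generalize specRad H = r at hG
  have hs : 0 ≤ r ^ 2 + 4 := by positivity
  have hsq := Real.sq_sqrt hs
  have hlt : |r| < Real.sqrt (r ^ 2 + 4) := by
    rw [← Real.sqrt_sq_eq_abs]
    exact Real.sqrt_lt_sqrt (sq_nonneg r) (by linarith)
  have hl := abs_lt.1 hlt
  generalize Real.sqrt (r ^ 2 + 4) = s at hsq hl
  have hp : 0 < (r + s) / 2 := by linarith
  constructor
  · rw [spec_corona_aux]
    refine ⟨hp.ne', ?_⟩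
    convert hG.1 using 1
    have : ((r + s) / 2)⁻¹ = (s - r) / 2 := by
      apply inv_eq_of_mul_eq_one_right
      nlinarith
    rw [this]
    ring
  · intro t ht
    rw [spec_corona_aux] at ht
    have h1 := hG.2 ht.2
    by_contra! hlt2
    have htp : 0 < t := hp.trans hlt2
    have h2 : t * (t - t⁻¹) ≤ t * r := mul_le_mul_of_nonneg_left h1 htp.le
    rw [mul_sub, mul_inv_cancel₀ ht.1] at h2
    nlinarith
end
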